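/- Mertens' theorem for number fields: if K is a number field, then there exists a constant C such that ∑_{N(𝔭) ≤ x} 1/N(𝔭) = log log x + C + O(1/log x) as x → ∞, where the sum runs over all nonzero prime ideals 𝔭 of the ring of integers O_K with norm N(𝔭) at most x. -/

import Mathlib

open Filter Asymptotics

lemma abel_le (c w : ℕ → ℝ) (C : ℝ) (hc : ∀ n, ∑ m ∈ Finset.Icc 1 n, c m ≤ C * n)
    (hw : ∀ m, 1 ≤ m → w (m+1) ≤ w m) (hw0 : ∀ m, 1 ≤ m → 0 ≤ w m) (n : ℕ) :
    ∑ m ∈ Finset.Icc 1 n, c m * w m ≤ C * ∑ m ∈ Finset.Icc 1 n, w m := by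
  rcases Nat.eq_zero_or_pos n with rfl | hn
  · simp
  have key : ∀ k : ℕ, (C * (k+1 : ℕ) - ∑ m ∈ Finset.Icc 1 (k+1), c m) * w (k+1) ≤
      C * ∑ m ∈ Finset.Icc 1 (k+1), w m - ∑ m ∈ Finset.Icc 1 (k+1), c m * w m := by
    intro k
    induction k with
    | zero => simp; linarith
    | succ k ih =>
      rw [Finset.sum_Icc_succ_top (by omega : 1 ≤ k+1+1), Finset.sum_Icc_succ_top (by omega : 1 ≤ k+1+1),
        Finset.sum_Icc_succ_top (by omega : 1 ≤ k+1+1)]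
      have h1 := hw (k+1) (by omega)
      have h2 := hc (k+1)
      have h3 := mul_le_mul_of_nonneg_left h1 (sub_nonneg.2 h2)
      push_cast at *
      linarith
  obtain ⟨k, rfl⟩ : ∃ k, n = k+1 := ⟨n-1, by omega⟩
  have := key k
  have h2 := mul_nonneg (sub_nonneg.2 (hc (k+1))) (hw0 (k+1) (by omega))
  linarith

lemma mertens_abstract (r : ℕ → ℝ) (C : ℝ)
    (h : ∀ n : ℕ, 1 ≤ n → |∑ m ∈ Finset.Icc 1 n, r m * Real.log m / m - Real.log n| ≤ C) :
    ∃ L C' : ℝ, ∀ n : ℕ, 2 ≤ n →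
      |∑ m ∈ Finset.Icc 1 n, r m / m - Real.log (Real.log n) - L| ≤ C' / Real.log n := by
  set s : ℕ → ℝ := fun n => ∑ m ∈ Finset.Icc 1 n, r m / m - Real.log (Real.log n) with hs
  set R : ℕ → ℝ := fun n => ∑ m ∈ Finset.Icc 1 n, r m * Real.log m / m - Real.log n with hR
  have hC : 0 ≤ C := (abs_nonneg _).trans (h 1 le_rfl)
  have key : ∀ m : ℕ, 2 ≤ m → ∀ n, m ≤ n →
      |s n - s m - (R n - R m) * (1 / Real.log n)| ≤
        (2 * C + 1) * (1 / Real.log m - 1 / Real.log n) := by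
    intro m hm n hmn
    induction n, hmn using Nat.le_induction with
    | base => simp
    | succ n hmn ih =>
      have hn2 : (2:ℝ) ≤ n := by exact_mod_cast hm.trans hmn
      have hu : 0 < Real.log n := Real.log_pos (by linarith)
      have huv : Real.log n ≤ Real.log (n+1) := Real.log_le_log (by linarith) (by linarith)
      have hv1 : Real.log (n+1) - Real.log n ≤ 1 := by
        rw [← Real.log_div (by linarith) (by linarith)]
        refine (Real.log_le_sub_one_of_pos (by positivity)).trans ?_
        rw [sub_le_iff_le_add, div_le_iff₀ (by linarith)]; linarith
      set u := Real.log n with hudef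
      set v := Real.log (n+1) with hvdef
      have hv : 0 < v := by linarith
      have hs' : s (n+1) - s n = r (n+1) / (n+1) - Real.log v + Real.log u := by
        simp only [hs]
        rw [Finset.sum_Icc_succ_top (by omega)]
        push_cast; ring
      have hR' : R (n+1) - R n = r (n+1) * v / (n+1) - v + u := by
        simp only [hR]
        rw [Finset.sum_Icc_succ_top (by omega)]
        push_cast; ring
      have e1 : r (n+1) / (n+1) = (R (n+1) - R n + v - u) * (1/v) := by
        rw [hR']; field_simp; ring
      have l1 : Real.log v - Real.log u ≤ (v - u) / u := by
        rw [← Real.log_div hv.ne' hu.ne']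
        refine (Real.log_le_sub_one_of_pos (by positivity)).trans ?_
        rw [sub_div, div_self hu.ne']
      have l2 : (v - u) / v ≤ Real.log v - Real.log u := by
        rw [← Real.log_div hv.ne' hu.ne']
        refine le_trans ?_ (Real.one_sub_inv_le_log_of_pos (by positivity))
        rw [sub_div, div_self hv.ne', inv_div]
      have hw : 0 ≤ 1/u - 1/v := sub_nonneg.2 (one_div_le_one_div_of_le hu huv)
      have l3 : (v - u) / u - (v-u)/v ≤ 1/u - 1/v := by
        have : (v - u) / u - (v-u)/v = (v-u) * (1/u - 1/v) := by ring
        rw [this]; nlinarith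
      have hRn := abs_le.1 (h n (by omega))
      have hRm := abs_le.1 (h m (by omega))
      change -C ≤ R n ∧ R n ≤ C at hRn
      change -C ≤ R m ∧ R m ≤ C at hRm
      push_cast
      rw [← hvdef]
      have e2 : s (n+1) - s m - (R (n+1) - R m) * (1/v) =
          (s n - s m - (R n - R m) * (1/u)) + (R n - R m) * (1/u - 1/v)
            + ((v-u)/v - (Real.log v - Real.log u)) := by
        have : s (n+1) = s n + (r (n+1) / (n+1) - Real.log v + Real.log u) := by linarith
        rw [this, e1]; ring
      rw [e2]
      have ih := abs_le.1 ih
      have a1 : (R n - R m) * (1/u - 1/v) ≤ 2 * C * (1/u-1/v) :=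
        mul_le_mul_of_nonneg_right (by linarith) hw
      have a2 : -(2 * C) * (1/u-1/v) ≤ (R n - R m) * (1/u - 1/v) :=
        mul_le_mul_of_nonneg_right (by linarith) hw
      rw [abs_le]
      constructor
      · linarith
      · linarith
  have key2 : ∀ m : ℕ, 2 ≤ m → ∀ n, m ≤ n → |s n - s m| ≤ (4 * C + 1) / Real.log m := by
    intro m hm n hmn
    have h1 := abs_le.1 (key m hm n hmn)
    have hm2 : (2:ℝ) ≤ m := by exact_mod_cast hm
    have hmn' : (m:ℝ) ≤ n := by exact_mod_cast hmn
    have hu : 0 < Real.log m := Real.log_pos (by linarith)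
    have huv : Real.log m ≤ Real.log n := Real.log_le_log (by linarith) (by linarith)
    have hw : 1/Real.log n ≤ 1/Real.log m := (one_div_le_one_div_of_le hu huv)
    have hw0 : 0 ≤ 1/Real.log n := by have := hu.trans_le huv; positivity
    have hRn := abs_le.1 (h n (by omega))
    have hRm := abs_le.1 (h m (by omega))
    change -C ≤ R n ∧ R n ≤ C at hRn
    change -C ≤ R m ∧ R m ≤ C at hRm
    have a1 : (R n - R m) * (1/Real.log n) ≤ 2 * C * (1/Real.log n) :=
        mul_le_mul_of_nonneg_right (by linarith) hw0
    have a2 : -(2 * C) * (1/Real.log n) ≤ (R n - R m) * (1/Real.log n) :=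
        mul_le_mul_of_nonneg_right (by linarith) hw0
    have a3 : C * (1/Real.log n) ≤ C * (1/Real.log m) := mul_le_mul_of_nonneg_left hw hC
    rw [div_eq_mul_one_div, abs_le]
    constructor <;> linarith
  have lim0 : Tendsto (fun m : ℕ => 2 * ((4 * C + 1) / Real.log m)) atTop (nhds 0) := by
    have : Tendsto (fun m : ℕ => (4 * C + 1) / Real.log m) atTop (nhds 0) :=
      Tendsto.const_div_atTop (Real.tendsto_log_atTop.comp tendsto_natCast_atTop_atTop) _
    simpa using this.const_mul 2
  have cau : CauchySeq s := by
    rw [Metric.cauchySeq_iff']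
    intro ε hε
    have := (lim0.eventually (gt_mem_nhds hε)).and (eventually_ge_atTop 2)
    obtain ⟨N, hN, hN2⟩ := this.exists
    refine ⟨N, fun n hn => ?_⟩
    rw [Real.dist_eq]
    have := key2 N hN2 n hn
    have h0 := (abs_nonneg _).trans this
    linarith
  obtain ⟨L, hL⟩ := cauchySeq_tendsto_of_complete cau
  refine ⟨L, 4 * C + 1, fun m hm => ?_⟩
  have : Tendsto (fun n => |s n - s m|) atTop (nhds |L - s m|) := (hL.sub_const _).abs
  have := le_of_tendsto this ((eventually_ge_atTop m).mono fun n hn => key2 m hm n hn)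
  rw [abs_sub_comm] at this
  exact this

/-- `∑ m^(1/d-1) ≤ d n^(1/d)` -/
lemma sum_rpow_le (d : ℕ) (hd : 1 ≤ d) (n : ℕ) :
    ∑ m ∈ Finset.Icc 1 n, (m:ℝ) ^ ((1:ℝ)/d) / m ≤ d * (n:ℝ) ^ ((1:ℝ)/d) := by
  have hd' : (1:ℝ) ≤ d := by exact_mod_cast hd
  induction n with
  | zero => simp; positivity
  | succ n ih =>
    rw [Finset.sum_Icc_succ_top (by omega)]
    have hb : ((n:ℝ)/(n+1)) ^ ((1:ℝ)/d) ≤ 1 + (1/d) * (-1/(n+1)) := by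
      have := rpow_one_add_le_one_add_mul_self (s := -1/((n:ℝ)+1)) (p := (1:ℝ)/d)
        (by rw [le_div_iff₀ (by positivity)]; linarith) (by positivity) (by rw [div_le_one (by linarith)]; exact hd')
      convert this using 2
      field_simp; ring
    rw [Real.div_rpow (by positivity) (by positivity), div_le_iff₀ (by positivity)] at hb
    have hm := mul_le_mul_of_nonneg_left hb (by linarith : (0:ℝ) ≤ d)
    push_cast
    have e : (d:ℝ) * ((1 + 1/d * (-1/(n+1))) * ((n:ℝ)+1)^((1:ℝ)/d)) = 
      d * ((n:ℝ)+1)^((1:ℝ)/d) - ((n:ℝ)+1)^((1:ℝ)/d)/(n+1) := by field_simp; ring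
    rw [e] at hm
    linarith

lemma sum_inv_sq_le (n : ℕ) : ∑ m ∈ Finset.Icc 1 n, 1 / (m:ℝ)^2 ≤ 2 := by
  have : ∀ n : ℕ, ∑ m ∈ Finset.Icc 1 (n+1), 1 / (m:ℝ)^2 ≤ 2 - 1/((n:ℝ)+1) := by
    intro n
    induction n with
    | zero => simp; norm_num
    | succ n ih =>
      rw [Finset.sum_Icc_succ_top (by omega)]
      have : 1 / (((n+1+1 : ℕ)):ℝ)^2 ≤ 1/((n:ℝ)+1) - 1/((n+1 : ℕ)+1 : ℝ) := by
        push_cast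
        rw [div_sub_div _ _ (by positivity) (by positivity), div_le_div_iff₀ (by positivity) (by positivity)]
        nlinarith
      linarith
  rcases Nat.eq_zero_or_pos n with rfl | hn
  · simp
  obtain ⟨k, rfl⟩ : ∃ k, n = k+1 := ⟨n-1, by omega⟩
  have h1 := this k
  have : (0:ℝ) ≤ 1/(k+1) := by positivity
  linarith

set_option linter.unusedSectionVars false
set_option linter.style.haveILetI false

namespace MertensNF
open NumberField Classical

noncomputable section

variable {K : Type*} [Field K] [NumberField K] {d : ℕ} (b : Module.Basis (Fin d) ℤ (𝓞 K))

def box (lo hi : ℤ) : Finset (𝓞 K) :=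
  (Fintype.piFinset fun _ : Fin d => Finset.Ico lo hi).map b.equivFun.symm.toEquiv.toEmbedding

lemma mem_box {lo hi : ℤ} {α : 𝓞 K} :
    α ∈ box b lo hi ↔ ∀ i, lo ≤ b.equivFun α i ∧ b.equivFun α i < hi := by
  unfold box
  rw [Finset.mem_map_equiv]
  simp [Fintype.mem_piFinset]

lemma card_box (lo hi : ℤ) : (box b lo hi).card = (hi - lo).toNat ^ d := by
  simp [box, Fintype.card_piFinset]

lemma finrank_eq {K : Type*} [Field K] [NumberField K] {d : ℕ} (b : Module.Basis (Fin d) ℤ (𝓞 K)) : Module.finrank ℤ (𝓞 K) = d := by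
  rw [Module.finrank_eq_card_basis b, Fintype.card_fin]

lemma d_pos {K : Type*} [Field K] [NumberField K] {d : ℕ} (b : Module.Basis (Fin d) ℤ (𝓞 K)) : 0 < d := by
  rw [← finrank_eq b]; exact Module.finrank_pos

/-- coordinate size -/
def sz (α : 𝓞 K) : ℝ := ‖b.equivFun α‖

lemma sz_nonneg (α : 𝓞 K) : 0 ≤ sz b α := norm_nonneg _

lemma abs_coord_le (α : 𝓞 K) (i : Fin d) : |(b.equivFun α i : ℝ)| ≤ sz b α := by
  have := norm_le_pi_norm (b.equivFun α) i
  rwa [Int.norm_eq_abs] at this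

lemma sz_le {α : 𝓞 K} {T : ℝ} (hT : 0 ≤ T) (h : ∀ i, |(b.equivFun α i : ℝ)| ≤ T) : sz b α ≤ T := by
  unfold sz
  rw [pi_norm_le_iff_of_nonneg hT]
  intro i; rw [Int.norm_eq_abs]; exact h i

lemma sz_add (α β : 𝓞 K) : sz b (α + β) ≤ sz b α + sz b β := by
  unfold sz; rw [map_add]; exact norm_add_le _ _

lemma sz_sum {ι : Type*} (s : Finset ι) (f : ι → 𝓞 K) : sz b (∑ i ∈ s, f i) ≤ ∑ i ∈ s, sz b (f i) := by
  unfold sz; rw [map_sum]; exact norm_sum_le _ _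

lemma sz_zsmul (n : ℤ) (α : 𝓞 K) : sz b (n • α) = |(n:ℝ)| * sz b α := by
  unfold sz; rw [map_smul, norm_smul, Int.norm_eq_abs]

lemma exists_sz_mul : ∃ C : ℝ, 0 ≤ C ∧ ∀ α β, sz b (α * β) ≤ C * (sz b α * sz b β) := by
  refine ⟨∑ i, ∑ j, sz b (b i * b j), Finset.sum_nonneg fun i _ => Finset.sum_nonneg fun j _ => sz_nonneg _ _, ?_⟩
  intro α β
  have e : α * β = ∑ i, ∑ j, (b.equivFun α i * b.equivFun β j) • (b i * b j) := by
    conv_lhs => rw [← b.sum_equivFun α, ← b.sum_equivFun β]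
    rw [Finset.sum_mul_sum]
    refine Finset.sum_congr rfl fun i _ => Finset.sum_congr rfl fun j _ => ?_
    rw [smul_mul_smul_comm]
  rw [e, Finset.sum_mul]
  refine (sz_sum _ _ _).trans (Finset.sum_le_sum fun i _ => ?_)
  rw [Finset.sum_mul]
  refine (sz_sum _ _ _).trans (Finset.sum_le_sum fun j _ => ?_)
  rw [sz_zsmul, mul_comm]
  refine mul_le_mul_of_nonneg_left ?_ (sz_nonneg _ _)
  push_cast; rw [abs_mul]
  exact mul_le_mul (abs_coord_le _ _ _) (abs_coord_le _ _ _) (abs_nonneg _) (sz_nonneg _ _)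

lemma exists_emb_le : ∃ C : ℝ, 0 ≤ C ∧ ∀ (σ : K →+* ℂ) (α : 𝓞 K), ‖σ (α : K)‖ ≤ C * sz b α := by
  refine ⟨∑ σ : K →+* ℂ, ∑ i, ‖σ (b i : K)‖, by positivity, ?_⟩
  intro σ α
  have h1 : ∑ i, ‖σ (b i : K)‖ ≤ ∑ σ : K →+* ℂ, ∑ i, ‖σ (b i : K)‖ :=
    Finset.single_le_sum (f := fun σ : K →+* ℂ => ∑ i, ‖σ (b i : K)‖) (fun _ _ => by positivity) (Finset.mem_univ σ)
  refine le_trans ?_ (mul_le_mul_of_nonneg_right h1 (sz_nonneg _ _))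
  conv_lhs => rw [← b.sum_equivFun α]
  rw [RingOfIntegers.coe_eq_algebraMap, map_sum, map_sum, Finset.sum_mul]
  refine (norm_sum_le _ _).trans (Finset.sum_le_sum fun i _ => ?_)
  rw [zsmul_eq_mul, map_mul, map_mul, norm_mul, mul_comm]
  refine mul_le_mul_of_nonneg_left ?_ (norm_nonneg _)
  simpa using abs_coord_le b α i

lemma absNorm_eq_prod (α : 𝓞 K) :
    ((Ideal.absNorm (Ideal.span {α}) : ℕ) : ℝ) = ∏ σ : K →+* ℂ, ‖σ (α : K)‖ := by
  rw [Ideal.absNorm_span_singleton]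
  have h := (congr_arg (‖·‖) (Algebra.norm_eq_prod_embeddings ℚ ℂ (α : K)))
  simp only [norm_prod] at h
  rw [← Fintype.prod_equiv (RingHom.equivRatAlgHom K ℂ) (fun σ => ‖σ (α:K)‖) (fun σ => ‖σ (α:K)‖) (fun _ => rfl)] at h
  rw [← h, ← Algebra.coe_norm_int]
  simp [Nat.cast_natAbs]

lemma card_emb {K : Type*} [Field K] [NumberField K] {d : ℕ} (b : Module.Basis (Fin d) ℤ (𝓞 K)) : Fintype.card (K →+* ℂ) = d := by
  rw [NumberField.Embeddings.card, ← RingOfIntegers.rank, finrank_eq b]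

/-- points of box have small norm -/
lemma exists_norm_le : ∃ C1 : ℕ, 1 ≤ C1 ∧ ∀ X : ℕ, ∀ α ∈ box b 0 X, 
    Ideal.absNorm (Ideal.span {α}) ≤ C1 * X ^ d := by
  obtain ⟨C, hC, h⟩ := exists_emb_le b
  refine ⟨⌈C ^ d⌉₊ + 1, by omega, fun X α hα => ?_⟩
  have : ((Ideal.absNorm (Ideal.span {α}) : ℕ) : ℝ) ≤ ((⌈C ^ d⌉₊ + 1 : ℕ):ℝ) * X ^ d := by
    rw [absNorm_eq_prod]
    have : ∏ σ : K →+* ℂ, ‖σ (α : K)‖ ≤ ∏ σ : K →+* ℂ, (C * X) := by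
      refine Finset.prod_le_prod (fun _ _ => norm_nonneg _) fun σ _ => (h σ α).trans ?_
      refine mul_le_mul_of_nonneg_left (sz_le _ (by positivity) fun i => ?_) hC
      have := (mem_box b).1 hα i
      rw [abs_of_nonneg (by exact_mod_cast this.1)]
      exact_mod_cast this.2.le
    refine this.trans ?_
    rw [Finset.prod_const, Finset.card_univ, card_emb b, mul_pow]
    refine mul_le_mul_of_nonneg_right ?_ (by positivity)
    push_cast
    linarith [Nat.le_ceil (C^d)]
  exact_mod_cast this

/-- small element in an ideal -/
lemma exists_small (I : Ideal (𝓞 K)) (hI : I ≠ ⊥) :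
    ∃ γ ∈ I, γ ≠ 0 ∧ sz b γ ≤ ((Ideal.absNorm I : ℕ):ℝ) ^ ((1:ℝ)/d) := by
  set N := Ideal.absNorm I with hN
  have hN0 : N ≠ 0 := by rwa [hN, Ne, Ideal.absNorm_eq_zero_iff]
  set y := (N:ℝ) ^ ((1:ℝ)/d) with hy
  have hy0 : 0 ≤ y := by positivity
  have hdp := d_pos b
  set Y := ⌊y⌋₊ + 1 with hY
  have hYN : N < Y ^ d := by
    have h1 : y < Y := by rw [hY]; push_cast; exact Nat.lt_floor_add_one y
    have h2 : y ^ d < (Y:ℝ) ^ d := pow_lt_pow_left₀ h1 hy0 hdp.ne'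
    have h3 : y ^ d = N := by
      rw [hy, ← Real.rpow_natCast, ← Real.rpow_mul (by positivity)]
      rw [one_div_mul_cancel (by positivity), Real.rpow_one]
    rw [h3] at h2
    exact_mod_cast h2
  haveI : Finite (𝓞 K ⧸ I) := (Ideal.absNorm_ne_zero_iff I).1 hN0
  haveI := Fintype.ofFinite (𝓞 K ⧸ I)
  have hcard : (Finset.univ : Finset (𝓞 K ⧸ I)).card < (box b 0 Y).card := by
    rw [card_box, Finset.card_univ, ← Nat.card_eq_fintype_card]
    have : N = Nat.card (𝓞 K ⧸ I) := by rw [hN, Ideal.absNorm_apply, Submodule.cardQuot_apply]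
    rw [← this]; simpa using hYN
  obtain ⟨α, hα, β, hβ, hne, he⟩ := Finset.exists_ne_map_eq_of_card_lt_of_maps_to hcard
    (f := Ideal.Quotient.mk I) (fun _ _ => Finset.mem_coe.2 (Finset.mem_univ _))
  refine ⟨α - β, Ideal.Quotient.eq.1 he, sub_ne_zero.2 hne, ?_⟩
  refine sz_le b hy0 fun i => ?_
  have h1 := (mem_box b).1 hα i
  have h2 := (mem_box b).1 hβ i
  rw [map_sub, Pi.sub_apply]
  have h3 : |b.equivFun α i - b.equivFun β i| ≤ (⌊y⌋₊ : ℤ) := by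
    rw [abs_le]; omega
  calc |((b.equivFun α i - b.equivFun β i : ℤ):ℝ)| ≤ ((⌊y⌋₊ : ℤ) : ℝ) := by exact_mod_cast h3
    _ = (⌊y⌋₊ : ℝ) := by simp
    _ ≤ y := Nat.floor_le hy0

lemma exists_reps : ∃ C : ℝ, 0 ≤ C ∧ ∀ I : Ideal (𝓞 K), I ≠ ⊥ → ∀ α, ∃ ρ, α - ρ ∈ I ∧ 
    sz b ρ ≤ C * ((Ideal.absNorm I : ℕ):ℝ) ^ ((1:ℝ)/d) := by
  obtain ⟨C, hC, hmul⟩ := exists_sz_mul b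
  refine ⟨C, hC, fun I hI α => ?_⟩
  obtain ⟨γ, hγI, hγ0, hγ⟩ := exists_small b I hI
  set m : ℕ := Ideal.absNorm (Ideal.span {γ}) with hm
  have hm0 : m ≠ 0 := by
    rw [hm, Ne, Ideal.absNorm_eq_zero_iff, Ideal.span_singleton_eq_bot]; exact hγ0
  obtain ⟨δ, hδ⟩ := Ideal.mem_span_singleton'.1 (Ideal.absNorm_mem (Ideal.span {γ}))
  rw [← hm] at hδ
  set q : 𝓞 K := b.equivFun.symm (fun i => b.equivFun (α * δ) i / (m:ℤ)) with hq
  set s : 𝓞 K := b.equivFun.symm (fun i => b.equivFun (α * δ) i % (m:ℤ)) with hs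
  have hsum : α * δ = (m:𝓞 K) * q + s := by
    have h1 : (m : 𝓞 K) * q = (m:ℤ) • q := by simp
    rw [h1]
    apply b.equivFun.injective
    rw [map_add, map_smul, hq, hs, LinearEquiv.apply_symm_apply, LinearEquiv.apply_symm_apply]
    ext i
    simp only [Pi.add_apply, Pi.smul_apply, smul_eq_mul]
    exact (Int.mul_ediv_add_emod _ _).symm
  refine ⟨α - γ * q, ?_, ?_⟩
  · rw [sub_sub_cancel]; exact I.mul_mem_right _ hγI
  have h2 : (m:ℤ) • (α - γ * q) = γ * s := by
    have h1 : (m:ℤ) • (α - γ * q) = (m : 𝓞 K) * (α - γ * q) := by simp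
    rw [h1]
    have : s = α * δ - m * q := by rw [hsum]; ring
    rw [this, ← hδ]; ring
  have h3 := hmul γ s
  rw [← h2, sz_zsmul] at h3
  have hs' : sz b s ≤ m := by
    refine sz_le b (by positivity) fun i => ?_
    rw [hs, LinearEquiv.apply_symm_apply]
    have a1 := Int.emod_nonneg (b.equivFun (α * δ) i) (by exact_mod_cast hm0 : (m:ℤ) ≠ 0)
    have a2 := Int.emod_lt_of_pos (b.equivFun (α * δ) i) (by omega : (0:ℤ) < m)
    rw [abs_of_nonneg (by exact_mod_cast a1)]
    exact_mod_cast a2.le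
  have hmpos : (0:ℝ) < m := by positivity
  have h4 : (m:ℝ) * sz b (α - γ * q) ≤ m * (C * sz b γ) := by
    calc (m:ℝ) * sz b (α - γ * q) = |((m:ℤ):ℝ)| * sz b (α - γ * q) := by simp
      _ ≤ _ := h3
      _ ≤ C * (sz b γ * m) := by gcongr; exact sz_nonneg _ _
      _ = _ := by ring
  exact (le_of_mul_le_mul_left h4 hmpos).trans (mul_le_mul_of_nonneg_left hγ hC)

/-- number of points of the ideal in the box -/
def cnt (X : ℕ) (I : Ideal (𝓞 K)) : ℕ := ((box b 0 X).filter (· ∈ I)).card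

lemma cnt_bounds (X D : ℕ) (I : Ideal (𝓞 K)) (hI : I ≠ ⊥)
    (hD : ∀ α, ∃ ρ, α - ρ ∈ I ∧ sz b ρ ≤ D) :
    cnt b X I * Ideal.absNorm I ≤ (X + 2 * D) ^ d ∧ (X - 2 * D) ^ d ≤ cnt b X I * Ideal.absNorm I := by
  have hN0 : Ideal.absNorm I ≠ 0 := by rwa [Ne, Ideal.absNorm_eq_zero_iff]
  haveI : Finite (𝓞 K ⧸ I) := (Ideal.absNorm_ne_zero_iff I).1 hN0
  haveI := Fintype.ofFinite (𝓞 K ⧸ I)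
  have hNc : Ideal.absNorm I = (Finset.univ : Finset (𝓞 K ⧸ I)).card := by
    rw [Finset.card_univ, ← Nat.card_eq_fintype_card, Ideal.absNorm_apply, Submodule.cardQuot_apply]
  have hrep : ∀ q : 𝓞 K ⧸ I, ∃ ρ, Ideal.Quotient.mk I ρ = q ∧ sz b ρ ≤ D := by
    intro q
    obtain ⟨α, rfl⟩ := Ideal.Quotient.mk_surjective q
    obtain ⟨ρ, h1, h2⟩ := hD α
    exact ⟨ρ, (Ideal.Quotient.eq.2 h1).symm, h2⟩
  choose ρ hρ hρD using hrep
  have hco : ∀ q i, -(D:ℤ) ≤ b.equivFun (ρ q) i ∧ b.equivFun (ρ q) i ≤ D := by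
    intro q i
    have := abs_le.1 ((abs_coord_le b (ρ q) i).trans (hρD q))
    exact ⟨by exact_mod_cast this.1, by exact_mod_cast this.2⟩
  have hprod : cnt b X I * Ideal.absNorm I =
      (((box b 0 X).filter (· ∈ I)) ×ˢ (Finset.univ : Finset (𝓞 K ⧸ I))).card := by
    rw [Finset.card_product, hNc, cnt]
  rw [hprod]
  constructor
  · have e : (X + 2 * D)^d = (box b (-(D:ℤ)) (X + D)).card := by
      rw [card_box]; congr 1; omega
    rw [e]
    refine Finset.card_le_card_of_injOn (fun p => p.1 + ρ p.2) ?_ ?_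
    · rintro ⟨α, q⟩ h
      simp only [Finset.coe_product, Set.mem_prod, Finset.mem_coe, Finset.mem_filter] at h
      simp only [Finset.mem_coe]
      rw [mem_box]
      intro i
      have h1 := (mem_box b).1 h.1.1 i
      have h2 := hco q i
      rw [map_add, Pi.add_apply]
      omega
    · rintro ⟨α, q⟩ h ⟨α', q'⟩ h' he
      simp only [Finset.coe_product, Set.mem_prod, Finset.mem_coe, Finset.mem_filter] at h h'
      simp only at he
      have hq : q = q' := by
        have := congr_arg (Ideal.Quotient.mk I) he
        rwa [map_add, map_add, Ideal.Quotient.eq_zero_iff_mem.2 h.1.2,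
          Ideal.Quotient.eq_zero_iff_mem.2 h'.1.2, hρ, hρ, zero_add, zero_add] at this
      subst hq
      simpa using he
  · have e : (X - 2 * D)^d = (box b (D:ℤ) (X - D)).card := by
      rw [card_box]; congr 1; omega
    rw [e]
    refine Finset.card_le_card_of_injOn
      (fun α => (α - ρ (Ideal.Quotient.mk I α), Ideal.Quotient.mk I α)) ?_ ?_
    · intro α h
      simp only [Finset.coe_product, Set.mem_prod, Finset.mem_coe, Finset.mem_filter] at h ⊢
      refine ⟨⟨?_, ?_⟩, Finset.mem_univ _⟩
      · rw [mem_box]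
        intro i
        have h1 := (mem_box b).1 h i
        have h2 := hco (Ideal.Quotient.mk I α) i
        rw [map_sub, Pi.sub_apply]
        omega
      · rw [← Ideal.Quotient.eq_zero_iff_mem, map_sub, hρ, sub_self]
    · intro α h α' h' he
      simp only [Prod.mk.injEq] at he
      rw [he.2] at he
      simpa using he.1


lemma pow_sub_pow_le' (n : ℕ) (a c : ℝ) (ha : 0 ≤ a) (hac : a ≤ c) :
    c ^ (n+1) - a ^ (n+1) ≤ (n+1) * (c - a) * c ^ n := by
  induction n with
  | zero => simp
  | succ n ih =>
    have hc : 0 ≤ c := ha.trans hac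
    have h1 : a * (c ^ (n+1) - a ^ (n+1)) ≤ c * ((n+1) * (c - a) * c ^ n) := by
      refine (mul_le_mul_of_nonneg_left ih ha).trans (mul_le_mul_of_nonneg_right hac ?_)
      have := sub_nonneg.2 hac
      positivity
    have : c ^ (n+1+1) - a ^ (n+1+1) = c^(n+1) * (c - a) + a * (c ^ (n+1) - a ^ (n+1)) := by ring
    rw [this]
    push_cast
    calc _ ≤ c^(n+1) * (c - a) + c * ((n+1) * (c - a) * c ^ n) := by linarith
      _ = _ := by ring

lemma cnt_approx (C1 : ℕ) (hC1 : 1 ≤ C1) : ∃ C : ℝ, 0 ≤ C ∧ ∀ X : ℕ, 1 ≤ X → ∀ I : Ideal (𝓞 K), I ≠ ⊥ →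
    Ideal.absNorm I ≤ C1 * X ^ d →
    |(cnt b X I : ℝ) - (X:ℝ)^d / Ideal.absNorm I| ≤
      C * (X:ℝ)^(d-1) * (((Ideal.absNorm I : ℕ):ℝ) ^ ((1:ℝ)/d) / Ideal.absNorm I) := by
  obtain ⟨C0, hC0, hrep⟩ := exists_reps b
  have hdp := d_pos b
  obtain ⟨n, rfl⟩ : ∃ n, d = n + 1 := ⟨d - 1, by omega⟩
  set M : ℝ := 2 * (C0 + 1) * C1 with hM
  have hM0 : 0 ≤ M := by positivity
  refine ⟨(n+1) * (2 * (C0 + 1)) * (1 + M) ^ n, by positivity, fun X hX I hI hN => ?_⟩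
  set N := Ideal.absNorm I with hNdef
  have hN0 : N ≠ 0 := by rwa [hNdef, Ne, Ideal.absNorm_eq_zero_iff]
  have hN1 : (1:ℝ) ≤ N := by exact_mod_cast Nat.one_le_iff_ne_zero.2 hN0
  set y := (N:ℝ) ^ ((1:ℝ)/((n+1 : ℕ):ℝ)) with hy
  have hy1 : 1 ≤ y := Real.one_le_rpow hN1 (by positivity)
  have hyN : y ^ (n+1) = N := by
    rw [hy, ← Real.rpow_natCast, ← Real.rpow_mul (by positivity)]
    rw [one_div_mul_cancel (by positivity), Real.rpow_one]
  have hX1 : (1:ℝ) ≤ X := by exact_mod_cast hX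
  have hC1' : (1:ℝ) ≤ C1 := by exact_mod_cast hC1
  have hyX : y ≤ C1 * X := by
    refine le_of_pow_le_pow_left₀ (n := n+1) (by omega) (by positivity) ?_
    rw [hyN, mul_pow]
    calc (N:ℝ) ≤ C1 * X^(n+1) := by exact_mod_cast hN
      _ ≤ _ := mul_le_mul_of_nonneg_right (le_self_pow₀ hC1' (by omega)) (by positivity)
  set D := ⌈C0 * y⌉₊ with hD
  have hDy : (D:ℝ) ≤ (C0 + 1) * y := by
    have := Nat.ceil_lt_add_one (by positivity : 0 ≤ C0 * y)
    linarith
  have hDX : 2 * (D:ℝ) ≤ M * X := by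
    calc 2 * (D:ℝ) ≤ 2 * ((C0+1) * (C1 * X)) := by
          have := mul_le_mul_of_nonneg_left hyX (by positivity : 0 ≤ C0 + 1)
          linarith
      _ = _ := by rw [hM]; ring
  obtain ⟨hu, hl⟩ := cnt_bounds b X D I hI (fun α => by
    obtain ⟨ρ, h1, h2⟩ := hrep I hI α
    exact ⟨ρ, h1, h2.trans (Nat.le_ceil _)⟩)
  rw [← hNdef] at hu hl
  have hu' : (cnt b X I : ℝ) * N ≤ (X + 2 * D) ^ (n+1) := by exact_mod_cast hu
  have hl' : (((X - 2 * D : ℕ)):ℝ) ^ (n+1) ≤ (cnt b X I : ℝ) * N := by exact_mod_cast hl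
  have hsub1 : (((X - 2 * D : ℕ)):ℝ) ≤ X := by exact_mod_cast Nat.sub_le _ _
  have hsub2 : (X:ℝ) - (((X - 2 * D : ℕ)):ℝ) ≤ 2 * D := by
    have : X ≤ (X - 2 * D) + 2 * D := by omega
    have : (X:ℝ) ≤ ((X - 2 * D : ℕ):ℝ) + 2 * D := by exact_mod_cast this
    linarith
  have b1 := pow_sub_pow_le' n X (X + 2 * D) (by positivity) (by linarith [(Nat.cast_nonneg D : (0:ℝ) ≤ D)])
  have b2 := pow_sub_pow_le' n ((X - 2 * D : ℕ):ℝ) X (by positivity) hsub1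
  set E : ℝ := (n+1) * (2 * (C0 + 1)) * (1 + M) ^ n * (X:ℝ)^n * y with hE
  have c1 : ((n:ℝ)+1) * ((X + 2 * D) - X) * (X + 2 * D) ^ n ≤ E := by
    calc ((n:ℝ)+1) * ((X + 2 * D) - X) * (X + 2 * D) ^ n
        ≤ ((n:ℝ)+1) * (2 * ((C0+1) * y)) * ((1+M) * X) ^ n := by
          gcongr
          · linarith
          · linarith
      _ = E := by rw [hE, mul_pow]; ring
  have c2 : ((n:ℝ)+1) * (X - ((X - 2 * D : ℕ):ℝ)) * X ^ n ≤ E := by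
    calc ((n:ℝ)+1) * (X - ((X - 2 * D : ℕ):ℝ)) * X ^ n
        ≤ ((n:ℝ)+1) * (2 * ((C0+1) * y)) * ((1+M) * X) ^ n := by
          gcongr
          · linarith
          · nlinarith
      _ = E := by rw [hE, mul_pow]; ring
  have hfin : |(cnt b X I : ℝ) * N - (X:ℝ)^(n+1)| ≤ E := by
    rw [abs_le]; constructor <;> linarith
  have hNpos : (0:ℝ) < N := by linarith
  have e1 : (cnt b X I : ℝ) - (X:ℝ)^(n+1) / N = ((cnt b X I : ℝ) * N - (X:ℝ)^(n+1)) / N := by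
    field_simp
  rw [e1, abs_div, abs_of_pos hNpos]
  calc _ ≤ E / N := by gcongr
    _ = _ := by rw [hE, Nat.add_sub_cancel]; ring

/-- number of nonzero points of the ideal in the box -/
def cnt0 (X : ℕ) (I : Ideal (𝓞 K)) : ℕ := ((box b 0 X).filter (fun α => α ∈ I ∧ α ≠ 0)).card

lemma cnt0_le_cnt (X : ℕ) (I : Ideal (𝓞 K)) : cnt0 b X I ≤ cnt b X I := by
  unfold cnt0 cnt
  refine Finset.card_le_card fun α h => ?_
  rw [Finset.mem_filter] at h ⊢
  exact ⟨h.1, h.2.1⟩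

lemma cnt_le_cnt0 (X : ℕ) (I : Ideal (𝓞 K)) : cnt b X I ≤ cnt0 b X I + 1 := by
  unfold cnt0 cnt
  rw [← Finset.card_singleton (0 : 𝓞 K)]
  refine (Finset.card_le_card fun α h => ?_).trans (Finset.card_union_le _ _)
  rw [Finset.mem_filter] at h
  rw [Finset.mem_union, Finset.mem_filter, Finset.mem_singleton]
  by_cases h0 : α = 0
  · exact Or.inr h0
  · exact Or.inl ⟨h.1, h.2, h0⟩

lemma norm_le_of_dvd {C1 X : ℕ} (hC : ∀ α ∈ box b 0 X, Ideal.absNorm (Ideal.span {α}) ≤ C1 * X ^ d)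
    {α : 𝓞 K} (hα : α ∈ box b 0 X) (h0 : α ≠ 0) {I : Ideal (𝓞 K)} (hI : α ∈ I) :
    Ideal.absNorm I ≤ C1 * X ^ d := by
  refine le_trans (Nat.le_of_dvd ?_ (Ideal.absNorm_dvd_absNorm_of_le ((Ideal.span_singleton_le_iff_mem I).2 hI))) (hC α hα)
  rw [Nat.pos_iff_ne_zero, Ne, Ideal.absNorm_eq_zero_iff, Ideal.span_singleton_eq_bot]; exact h0

lemma cnt0_bound : ∃ C : ℝ, 0 ≤ C ∧ ∀ X : ℕ, 1 ≤ X → ∀ I : Ideal (𝓞 K), I ≠ ⊥ →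
    (cnt0 b X I : ℝ) ≤ C * (X:ℝ)^d / Ideal.absNorm I := by
  obtain ⟨C1, hC1, hnorm⟩ := exists_norm_le b
  obtain ⟨C, hC, happ⟩ := cnt_approx b C1 hC1
  have hdp := d_pos b
  refine ⟨1 + C * C1, by positivity, fun X hX I hI => ?_⟩
  by_cases hN : Ideal.absNorm I ≤ C1 * X ^ d
  · have h1 := (abs_le.1 (happ X hX I hI hN)).2
    have h2 : (cnt0 b X I : ℝ) ≤ cnt b X I := by exact_mod_cast cnt0_le_cnt b X I
    set N := Ideal.absNorm I
    have hX1 : (1:ℝ) ≤ X := by exact_mod_cast hX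
    have hC1' : (1:ℝ) ≤ C1 := by exact_mod_cast hC1
    set y := (N:ℝ) ^ ((1:ℝ)/d) with hy
    have hyN : y ^ d = N := by
      rw [hy, ← Real.rpow_natCast, ← Real.rpow_mul (by positivity)]
      rw [one_div_mul_cancel (by positivity), Real.rpow_one]
    have hyX : y ≤ C1 * X := by
      refine le_of_pow_le_pow_left₀ (n := d) (by omega) (by positivity) ?_
      rw [hyN, mul_pow]
      calc (N:ℝ) ≤ C1 * X^d := by exact_mod_cast hN
        _ ≤ _ := mul_le_mul_of_nonneg_right (le_self_pow₀ hC1' (by omega)) (by positivity)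
    have h3 : C * (X:ℝ)^(d-1) * (y / N) ≤ C * (X:ℝ)^(d-1) * (C1 * X / N) := by gcongr
    have h4 : C * (X:ℝ)^(d-1) * (C1 * X / N) = C * C1 * (X:ℝ)^d / N := by
      obtain ⟨n, rfl⟩ : ∃ n, d = n + 1 := ⟨d - 1, by omega⟩
      rw [Nat.add_sub_cancel, pow_succ]; ring
    have h5 : (1 + C * C1) * (X:ℝ)^d / N = (X:ℝ)^d / N + C * C1 * (X:ℝ)^d / N := by ring
    rw [h5]; linarith
  · have : cnt0 b X I = 0 := by
      unfold cnt0
      rw [Finset.card_eq_zero, Finset.filter_eq_empty_iff]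
      rintro α hα ⟨h1, h2⟩
      exact hN (norm_le_of_dvd b (hnorm X) hα h2 h1)
    rw [this]
    push_cast
    positivity

lemma card_small (n : ℕ) (b : Module.Basis (Fin (n+1)) ℤ (𝓞 K)) : ∃ C : ℝ, 0 ≤ C ∧ ∀ X : ℕ, ∀ σ : K →+* ℂ, ∀ T : ℝ,
    1 ≤ T → (((box b 0 X).filter (fun α : 𝓞 K => ‖σ (α:K)‖ ≤ T)).card : ℝ) ≤ C * T * (X:ℝ)^n := by
  set c : ℝ := ∑ σ : K →+* ℂ, 2 / ‖σ (b 0 : K)‖ with hc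
  have hc0 : 0 ≤ c := by positivity
  refine ⟨2 * c + 1, by positivity, fun X σ T hT => ?_⟩
  have hb0 : 0 < ‖σ (b 0 : K)‖ := by
    rw [norm_pos_iff, Ne, map_eq_zero, RingOfIntegers.coe_eq_zero_iff]
    exact b.ne_zero 0
  have hcσ : 2 / ‖σ (b 0 : K)‖ ≤ c :=
    Finset.single_le_sum (f := fun σ : K →+* ℂ => 2 / ‖σ (b 0 : K)‖) (fun _ _ => by positivity) (Finset.mem_univ σ)
  set M := ⌊c * T⌋₊ with hM
  have key := Finset.card_le_mul_card_image_of_maps_to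
    (s := (box b 0 X).filter (fun α : 𝓞 K => ‖σ (α:K)‖ ≤ T))
    (t := Fintype.piFinset fun _ : Fin n => Finset.Ico (0:ℤ) X)
    (f := fun α => Fin.tail (b.equivFun α)) (by
      intro α hα
      rw [Finset.mem_filter, mem_box] at hα
      rw [Fintype.mem_piFinset]
      intro i
      rw [Finset.mem_Ico]
      exact hα.1 i.succ) (2 * M + 1) (by
      intro v hv
      rcases Finset.eq_empty_or_nonempty
        ((Finset.filter (fun α : 𝓞 K => ‖σ (α:K)‖ ≤ T) (box b 0 X)).filter (fun α => Fin.tail (b.equivFun α) = v)) with he | ⟨β, hβ⟩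
      · rw [he]; simp
      rw [Finset.mem_filter, Finset.mem_filter] at hβ
      have e : 2 * M + 1 = (Finset.Icc (b.equivFun β 0 - M) (b.equivFun β 0 + M)).card := by
        rw [Int.card_Icc]; omega
      rw [e]
      refine Finset.card_le_card_of_injOn (fun α => b.equivFun α 0) ?_ ?_
      · intro α hα
        rw [Finset.mem_coe, Finset.mem_filter, Finset.mem_filter] at hα
        simp only [Finset.coe_Icc, Set.mem_Icc]
        have hsub : α - β = (b.equivFun α 0 - b.equivFun β 0) • b 0 := by
          conv_lhs => rw [← b.sum_equivFun α, ← b.sum_equivFun β]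
          rw [Fin.sum_univ_succ, Fin.sum_univ_succ]
          have : ∀ i : Fin n, b.equivFun α i.succ = b.equivFun β i.succ := fun i =>
            congr_fun (hα.2.trans hβ.2.symm) i
          simp only [this]
          rw [sub_smul]; abel
        have h1 : ‖σ ((α - β : 𝓞 K) : K)‖ ≤ 2 * T := by
          rw [RingOfIntegers.coe_eq_algebraMap, map_sub, map_sub]
          have := norm_sub_le (σ (α:K)) (σ (β:K))
          linarith [hα.1.2, hβ.1.2]
        rw [hsub, RingOfIntegers.coe_eq_algebraMap, zsmul_eq_mul, map_mul, map_mul, norm_mul] at h1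
        rw [map_intCast, map_intCast, Complex.norm_intCast] at h1
        have h2 : |((b.equivFun α 0 - b.equivFun β 0 : ℤ) : ℝ)| ≤ c * T := by
          rw [← le_div_iff₀ hb0] at h1
          refine h1.trans ?_
          calc 2 * T / ‖σ (b 0 : K)‖ = (2 / ‖σ (b 0 : K)‖) * T := by ring
            _ ≤ _ := by gcongr
        have h3 : |b.equivFun α 0 - b.equivFun β 0| ≤ M := by
          rw [← Int.natCast_natAbs]
          have : (b.equivFun α 0 - b.equivFun β 0).natAbs ≤ M := by
            rw [hM]
            refine Nat.le_floor ?_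
            rw [Nat.cast_natAbs]; push_cast at h2 ⊢; exact h2
          exact_mod_cast this
        rw [abs_le] at h3
        constructor <;> omega
      · intro α hα α' hα' he
        rw [Finset.mem_coe, Finset.mem_filter, Finset.mem_filter] at hα hα'
        apply b.equivFun.injective
        ext i
        refine Fin.cases ?_ (fun j => ?_) i
        · exact he
        · exact congr_fun (hα.2.trans hα'.2.symm) j)
  rw [Fintype.card_piFinset] at key
  simp only [Int.card_Ico, sub_zero, Int.toNat_natCast, Finset.prod_const, Finset.card_univ, Fintype.card_fin] at key
  have key' : (((box b 0 X).filter (fun α : 𝓞 K => ‖σ (α:K)‖ ≤ T)).card : ℝ) ≤ (2 * M + 1) * (X:ℝ)^n := by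
    exact_mod_cast key
  refine key'.trans (mul_le_mul_of_nonneg_right ?_ (by positivity))
  have := Nat.floor_le (by positivity : 0 ≤ c * T)
  rw [← hM] at this
  nlinarith

lemma log_le_sum_inv (X k : ℕ) (hk : 1 ≤ k) :
    Real.log X - Real.log k ≤ ∑ j ∈ Finset.Ico k (X+1), 1 / (j:ℝ) := by
  rcases le_or_gt k X with h | h
  · have : ∀ m, k ≤ m → Real.log m - Real.log k ≤ ∑ j ∈ Finset.Ico k m, 1 / (j:ℝ) := by
      intro m hm
      induction m, hm using Nat.le_induction with
      | base => simp
      | succ m hm ih =>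
        rw [Finset.sum_Ico_succ_top hm]
        have hm0 : (0:ℝ) < m := by exact_mod_cast (by omega : 0 < m)
        have : Real.log ((m+1:ℕ):ℝ) - Real.log m ≤ 1 / m := by
          push_cast
          rw [← Real.log_div (by positivity) (by positivity)]
          refine (Real.log_le_sub_one_of_pos (by positivity)).trans (le_of_eq ?_)
          field_simp; ring
        linarith
    have h1 := this (X+1) (by omega)
    have hX0 : (0:ℝ) < X := by exact_mod_cast (by omega : 0 < X)
    have h2 : Real.log X ≤ Real.log ((X+1 : ℕ):ℝ) := Real.log_le_log hX0 (by push_cast; linarith)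
    linarith
  · have h0 : (0:ℝ) ≤ ∑ j ∈ Finset.Ico k (X+1), 1 / (j:ℝ) := Finset.sum_nonneg fun _ _ => by positivity
    rcases Nat.eq_zero_or_pos X with rfl | hX
    · have : 0 ≤ Real.log (k:ℝ) := Real.log_natCast_nonneg _
      simp only [Nat.cast_zero, Real.log_zero]; linarith
    · have : Real.log X ≤ Real.log k := Real.log_le_log (by exact_mod_cast hX) (by exact_mod_cast h.le)
      linarith

lemma layer (X : ℕ) (u : ℝ) (hu : 0 ≤ u) : Real.log X - Real.log (max 1 u) ≤
    ∑ j ∈ Finset.Icc 1 X, if u ≤ (j:ℝ) + 1 then 1 / (j:ℝ) else 0 := by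
  have h1 := log_le_sum_inv X (max 1 ⌊u⌋₊) (le_max_left _ _)
  have h2 : Real.log ((max 1 ⌊u⌋₊ : ℕ):ℝ) ≤ Real.log (max 1 u) := by
    refine Real.log_le_log (by exact_mod_cast (by omega : 0 < max 1 ⌊u⌋₊)) ?_
    push_cast
    exact max_le_max le_rfl (Nat.floor_le hu)
  have h3 : ∑ j ∈ Finset.Ico (max 1 ⌊u⌋₊) (X+1), 1 / (j:ℝ) ≤
      ∑ j ∈ Finset.Icc 1 X, if u ≤ (j:ℝ) + 1 then 1 / (j:ℝ) else 0 := by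
    rw [← Finset.sum_filter]
    refine Finset.sum_le_sum_of_subset_of_nonneg ?_ (fun _ _ _ => by positivity)
    intro j hj
    rw [Finset.mem_Ico] at hj
    rw [Finset.mem_filter, Finset.mem_Icc]
    refine ⟨⟨by omega, by omega⟩, ?_⟩
    have : ⌊u⌋₊ ≤ j := by omega
    have h4 := Nat.lt_floor_add_one u
    have : (⌊u⌋₊:ℝ) ≤ j := by exact_mod_cast this
    linarith
  linarith

lemma lower_log : ∃ C : ℝ, 0 ≤ C ∧ ∀ X : ℕ, 1 ≤ X →
    (X:ℝ)^d * Real.log ((X:ℝ)^d) - C * (X:ℝ)^d ≤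
      ∑ α ∈ box b 0 X, Real.log (Ideal.absNorm (Ideal.span {α}) : ℕ) := by
  have hdp := d_pos b
  obtain ⟨n, rfl⟩ : ∃ n, d = n + 1 := ⟨d - 1, by omega⟩
  obtain ⟨C, hC, hcard⟩ := card_small n b
  refine ⟨(n+1) * ((n+1) * (2 * C)), by positivity, fun X hX => ?_⟩
  have hX1 : (1:ℝ) ≤ X := by exact_mod_cast hX
  have hlogX : 0 ≤ Real.log X := Real.log_nonneg hX1
  set h : (K →+* ℂ) → 𝓞 K → ℝ := fun σ α =>
    ∑ j ∈ Finset.Icc 1 X, if ‖σ (α:K)‖ ≤ (j:ℝ) + 1 then 1 / (j:ℝ) else 0 with hh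
  have hnn : ∀ σ α, 0 ≤ h σ α := fun σ α => Finset.sum_nonneg fun _ _ => by split_ifs <;> positivity
  have hlayer : ∀ σ α, Real.log X - Real.log (max 1 ‖σ (α:K)‖) ≤ h σ α := fun σ α => layer X _ (norm_nonneg _)
  have hle : ∀ σ α, h σ α ≤ ∑ τ, h τ α := fun σ α =>
    Finset.single_le_sum (f := fun τ => h τ α) (fun _ _ => hnn _ _) (Finset.mem_univ σ)
  have pt : ∀ α : 𝓞 K, Real.log ((X:ℝ)^(n+1)) - Real.log (Ideal.absNorm (Ideal.span {α}) : ℕ) ≤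
      (n+1) * ∑ σ : K →+* ℂ, h σ α := by
    intro α
    have hS : 0 ≤ ∑ σ : K →+* ℂ, h σ α := Finset.sum_nonneg fun _ _ => hnn _ _
    rw [Real.log_pow]
    push_cast
    by_cases hex : ∃ σ : K →+* ℂ, ‖σ (α:K)‖ < 1
    · obtain ⟨σ, hσ⟩ := hex
      have h1 := hlayer σ α
      rw [max_eq_left hσ.le, Real.log_one] at h1
      have h2 : 0 ≤ Real.log (Ideal.absNorm (Ideal.span {α}) : ℕ) := Real.log_natCast_nonneg _
      have h3 : ((n:ℝ)+1) * Real.log X ≤ (n+1) * ∑ σ : K →+* ℂ, h σ α :=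
        mul_le_mul_of_nonneg_left (by linarith [hle σ α]) (by positivity)
      linarith
    · push Not at hex
      rw [absNorm_eq_prod, Real.log_prod (fun σ _ => by linarith [hex σ])]
      have h1 : ((n:ℝ)+1) * Real.log X = ∑ σ : K →+* ℂ, Real.log X := by
        rw [Finset.sum_const, Finset.card_univ, card_emb b, nsmul_eq_mul]; push_cast; ring
      rw [h1, ← Finset.sum_sub_distrib]
      have h2 : ∑ σ : K →+* ℂ, (Real.log X - Real.log ‖σ (α:K)‖) ≤ ∑ σ : K →+* ℂ, h σ α := by
        refine Finset.sum_le_sum fun σ _ => ?_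
        have := hlayer σ α
        rwa [max_eq_right (hex σ)] at this
      have : (0:ℝ) ≤ n := by positivity
      nlinarith
  have hsum : ∀ σ : K →+* ℂ, ∑ α ∈ box b 0 X, h σ α ≤ 2 * C * (X:ℝ)^(n+1) := by
    intro σ
    rw [hh]
    simp only
    rw [Finset.sum_comm]
    have : ∀ j ∈ Finset.Icc 1 X, (∑ α ∈ box b 0 X, if ‖σ (α:K)‖ ≤ (j:ℝ) + 1 then 1 / (j:ℝ) else 0) ≤
        2 * C * (X:ℝ)^n := by
      intro j hj
      have hj1 : (1:ℝ) ≤ j := by exact_mod_cast (Finset.mem_Icc.1 hj).1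
      rw [← Finset.sum_filter, Finset.sum_const, nsmul_eq_mul, mul_one_div, div_le_iff₀ (by linarith)]
      refine (hcard X σ ((j:ℝ)+1) (by linarith)).trans ?_
      have : C * ((j:ℝ)+1) ≤ C * (2 * j) := mul_le_mul_of_nonneg_left (by linarith) hC
      have := mul_le_mul_of_nonneg_right this (by positivity : (0:ℝ) ≤ (X:ℝ)^n)
      linarith
    refine (Finset.sum_le_sum this).trans ?_
    rw [Finset.sum_const, Nat.card_Icc, nsmul_eq_mul, Nat.add_sub_cancel, pow_succ]
    apply le_of_eq; ring
  have tot : ∑ α ∈ box b 0 X, (Real.log ((X:ℝ)^(n+1)) - Real.log (Ideal.absNorm (Ideal.span {α}) : ℕ)) ≤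
      (n+1) * ((n+1) * (2 * C * (X:ℝ)^(n+1))) := by
    refine (Finset.sum_le_sum fun α _ => pt α).trans ?_
    rw [← Finset.mul_sum, Finset.sum_comm]
    refine mul_le_mul_of_nonneg_left ((Finset.sum_le_sum fun σ _ => hsum σ).trans ?_) (by positivity)
    rw [Finset.sum_const, Finset.card_univ, card_emb b, nsmul_eq_mul]; push_cast; exact le_rfl
  rw [Finset.sum_sub_distrib, Finset.sum_const, card_box, nsmul_eq_mul] at tot
  simp only [sub_zero, Int.toNat_natCast] at tot
  push_cast at tot
  linarith

/-- primes of norm at most n -/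
def PF (K : Type*) [Field K] [NumberField K] (n : ℕ) : Finset (Ideal (𝓞 K)) :=
  (Set.Finite.subset (Ideal.finite_setOfPred_absNorm_le (S := 𝓞 K) n)
    (fun P h => h.2.2 : {P : Ideal (𝓞 K) | P.IsPrime ∧ P ≠ ⊥ ∧ Ideal.absNorm P ≤ n} ⊆ _)).toFinset

lemma mem_PF {n : ℕ} {P : Ideal (𝓞 K)} : P ∈ PF K n ↔ P.IsPrime ∧ P ≠ ⊥ ∧ Ideal.absNorm P ≤ n := by
  simp [PF]

lemma prime_of_mem_PF {n : ℕ} {P : Ideal (𝓞 K)} (h : P ∈ PF K n) : Prime P := by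
  rw [mem_PF] at h
  exact Ideal.prime_of_isPrime h.2.1 h.1

lemma two_le_of_mem_PF {n : ℕ} {P : Ideal (𝓞 K)} (h : P ∈ PF K n) : 2 ≤ Ideal.absNorm P := by
  rw [mem_PF] at h
  have h0 : Ideal.absNorm P ≠ 0 := by rw [Ne, Ideal.absNorm_eq_zero_iff]; exact h.2.1
  have h1 : Ideal.absNorm P ≠ 1 := by rw [Ne, Ideal.absNorm_eq_one_iff]; exact h.1.ne_top
  omega

/-- distinct primes containing a nonzero element -/
lemma sum_log_le (s : Finset (Ideal (𝓞 K))) (hs : ∀ P ∈ s, Prime P) (I : Ideal (𝓞 K)) (hI : I ≠ ⊥)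
    (hd : ∀ P ∈ s, I ≤ P) : ∑ P ∈ s, Real.log (Ideal.absNorm P) ≤ Real.log (Ideal.absNorm I) := by
  have h1 : ∏ P ∈ s, P ∣ I := Finset.prod_primes_dvd I hs (fun P hP => Ideal.dvd_iff_le.2 (hd P hP))
  have h2 : Ideal.absNorm (∏ P ∈ s, P) ∣ Ideal.absNorm I := map_dvd _ h1
  have hI0 : Ideal.absNorm I ≠ 0 := by rwa [Ne, Ideal.absNorm_eq_zero_iff]
  have h3 := Nat.le_of_dvd (Nat.pos_of_ne_zero hI0) h2
  have hne : ∀ P ∈ s, Ideal.absNorm P ≠ 0 := fun P hP => by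
    rw [Ne, Ideal.absNorm_eq_zero_iff]; exact (hs P hP).ne_zero
  rw [map_prod] at h3
  rw [← Real.log_prod (fun P hP => by exact_mod_cast hne P hP)]
  refine Real.log_le_log ?_ (by exact_mod_cast h3)
  exact Finset.prod_pos fun P hP => by exact_mod_cast Nat.pos_of_ne_zero (hne P hP)

lemma chebyshev_PF (n : ℕ) : ∑ P ∈ PF K n, Real.log (Ideal.absNorm P) ≤
    (Module.finrank ℤ (𝓞 K) * Real.log 4) * n := by
  have hp0 : ((primorial n : ℕ) : 𝓞 K) ≠ 0 := by exact_mod_cast (primorial_pos n).ne'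
  refine (sum_log_le (PF K n) (fun P hP => prime_of_mem_PF hP) (Ideal.span {((primorial n : ℕ) : 𝓞 K)})
    (by rw [Ne, Ideal.span_singleton_eq_bot]; exact hp0) ?_).trans ?_
  · intro P hP
    rw [Ideal.span_singleton_le_iff_mem]
    rw [mem_PF] at hP
    have := hP.1.isMaximal hP.2.1
    obtain ⟨p, k, hk, hpP, hp, hN⟩ := Ideal.exists_prime_and_absNorm_eq_pow P
    have hpn : p ≤ n := by
      refine le_trans ?_ hP.2.2
      rw [hN]; exact Nat.le_self_pow hk.ne' p
    have hdv : p ∣ primorial n := by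
      unfold primorial
      exact Finset.dvd_prod_of_mem (fun p => p) (by simp; exact ⟨by omega, hp⟩)
    obtain ⟨c, hc⟩ := hdv
    rw [hc]; push_cast
    exact P.mul_mem_right _ hpP
  · rw [Ideal.absNorm_span_natCast]
    push_cast
    rw [Real.log_pow, mul_assoc]
    refine mul_le_mul_of_nonneg_left ?_ (by positivity)
    rw [mul_comm, ← Real.log_pow]
    refine Real.log_le_log (by exact_mod_cast primorial_pos n) ?_
    exact_mod_cast primorial_le_four_pow n

/-- number of primes of norm m -/
def rr (K : Type*) [Field K] [NumberField K] (m : ℕ) : ℝ := ((PF K m).filter (fun P => Ideal.absNorm P = m)).card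

lemma sum_PF (n : ℕ) (f : ℕ → ℝ) : ∑ P ∈ PF K n, f (Ideal.absNorm P) = ∑ m ∈ Finset.Icc 1 n, rr K m * f m := by
  rw [← Finset.sum_fiberwise_of_maps_to (s := PF K n) (t := Finset.Icc 1 n) (g := fun P => Ideal.absNorm P)]
  · refine Finset.sum_congr rfl fun m hm => ?_
    rw [Finset.mem_Icc] at hm
    have : (PF K n).filter (fun P => Ideal.absNorm P = m) = (PF K m).filter (fun P => Ideal.absNorm P = m) := by
      ext P
      simp only [Finset.mem_filter, mem_PF]
      constructor
      · rintro ⟨⟨h1, h2, h3⟩, h4⟩; exact ⟨⟨h1, h2, h4.le⟩, h4⟩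
      · rintro ⟨⟨h1, h2, h3⟩, h4⟩; exact ⟨⟨h1, h2, h4.le.trans hm.2⟩, h4⟩
    rw [this, Finset.sum_congr rfl (fun P hP => by rw [(Finset.mem_filter.1 hP).2] : ∀ P ∈ _, f (Ideal.absNorm P) = f m),
      Finset.sum_const, nsmul_eq_mul, rr]
  · intro P hP
    rw [Finset.mem_Icc]
    exact ⟨(by have := two_le_of_mem_PF hP; omega), (mem_PF.1 hP).2.2⟩

/-- weighted sums -/
lemma weighted (w : ℕ → ℝ) (hw : ∀ m, 1 ≤ m → w (m+1) ≤ w m) (hw0 : ∀ m, 1 ≤ m → 0 ≤ w m) (n : ℕ) :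
    ∑ P ∈ PF K n, Real.log (Ideal.absNorm P) * w (Ideal.absNorm P) ≤
      (Module.finrank ℤ (𝓞 K) * Real.log 4) * ∑ m ∈ Finset.Icc 1 n, w m := by
  rw [sum_PF n (fun m => Real.log m * w m)]
  have := abel_le (fun m => rr K m * Real.log m) w (Module.finrank ℤ (𝓞 K) * Real.log 4) (fun n => by
    have := chebyshev_PF (K := K) n
    rwa [sum_PF n (fun m => Real.log m)] at this) hw hw0 n
  simpa only [mul_assoc] using this

lemma weighted_rpow (d : ℕ) (hd : 1 ≤ d) (n : ℕ) :
    ∑ P ∈ PF K n, Real.log (Ideal.absNorm P) * (((Ideal.absNorm P : ℕ):ℝ) ^ ((1:ℝ)/d) / (Ideal.absNorm P : ℕ)) ≤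
      (Module.finrank ℤ (𝓞 K) * Real.log 4) * (d * (n:ℝ) ^ ((1:ℝ)/d)) := by
  refine (weighted (fun m => (m:ℝ)^((1:ℝ)/d) / m) ?_ (fun m _ => by positivity) n).trans ?_
  · intro m hm
    have hd' : (1:ℝ) ≤ d := by exact_mod_cast hd
    have hm0 : (0:ℝ) < m := by exact_mod_cast hm
    have e : ∀ t : ℝ, 0 < t → t ^ ((1:ℝ)/d) / t = t ^ ((1:ℝ)/d - 1) := fun t ht => by
      rw [Real.rpow_sub ht, Real.rpow_one]
    rw [e _ hm0, e _ (by positivity)]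
    refine Real.rpow_le_rpow_of_nonpos hm0 (by push_cast; linarith) ?_
    rw [sub_nonpos, div_le_one (by linarith)]; exact hd'
  · refine mul_le_mul_of_nonneg_left (sum_rpow_le d hd n) ?_
    have := Real.log_nonneg (by norm_num : (1:ℝ) ≤ 4)
    positivity

lemma weighted_sq (n : ℕ) :
    ∑ P ∈ PF K n, Real.log (Ideal.absNorm P) * (1 / ((Ideal.absNorm P : ℕ):ℝ)^2) ≤
      (Module.finrank ℤ (𝓞 K) * Real.log 4) * 2 := by
  refine (weighted (fun m => 1 / (m:ℝ)^2) ?_ (fun m _ => by positivity) n).trans ?_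
  · intro m hm
    have hm0 : (0:ℝ) < m := by exact_mod_cast hm
    gcongr
    simp
  · refine mul_le_mul_of_nonneg_left (sum_inv_sq_le n) ?_
    have := Real.log_nonneg (by norm_num : (1:ℝ) ≤ 4)
    positivity

lemma log_norm_le {Y : ℕ} {α : 𝓞 K} (h0 : α ≠ 0) (hY : Ideal.absNorm (Ideal.span {α}) ≤ Y) :
    Real.log (Ideal.absNorm (Ideal.span {α}) : ℕ) ≤
      ∑ P ∈ PF K Y, Real.log (Ideal.absNorm P) * ∑ k ∈ Finset.Icc 1 Y, if α ∈ P ^ k then (1:ℝ) else 0 := by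
  set I := Ideal.span {α} with hIdef
  have hI0 : I ≠ ⊥ := by rw [hIdef, Ne, Ideal.span_singleton_eq_bot]; exact h0
  have hN0 : Ideal.absNorm I ≠ 0 := by rwa [Ne, Ideal.absNorm_eq_zero_iff]
  set s := UniqueFactorizationMonoid.normalizedFactors I with hs
  have hprod : ∏ P ∈ s.toFinset, P ^ s.count P = I := by
    rw [← Finset.prod_multiset_count, hs, Ideal.prod_normalizedFactors_eq_self hI0]
  have hprime : ∀ P ∈ s.toFinset, Prime P := fun P hP =>
    UniqueFactorizationMonoid.prime_of_normalized_factor P (Multiset.mem_toFinset.1 hP)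
  have hPN : ∀ J : Ideal (𝓞 K), J ∣ I → Ideal.absNorm J ≤ Y := fun J hJ =>
    (Nat.le_of_dvd (Nat.pos_of_ne_zero hN0) (map_dvd _ hJ)).trans hY
  have hsub : s.toFinset ⊆ PF K Y := by
    intro P hP
    rw [mem_PF]
    refine ⟨Ideal.isPrime_of_prime (hprime P hP), (hprime P hP).ne_zero, ?_⟩
    exact hPN P (UniqueFactorizationMonoid.dvd_of_mem_normalizedFactors (Multiset.mem_toFinset.1 hP))
  have hlog : Real.log (Ideal.absNorm I : ℕ) = ∑ P ∈ s.toFinset, Real.log (Ideal.absNorm P) * s.count P := by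
    conv_lhs => rw [← hprod]
    rw [map_prod]
    push_cast
    rw [Real.log_prod]
    · refine Finset.sum_congr rfl fun P _ => ?_
      rw [map_pow]; push_cast; rw [Real.log_pow, mul_comm]
    · intro P hP
      rw [map_pow]; push_cast
      refine pow_ne_zero _ ?_
      have : Ideal.absNorm P ≠ 0 := by
        rw [Ne, Ideal.absNorm_eq_zero_iff]; exact (hprime P hP).ne_zero
      exact_mod_cast this
  rw [hlog]
  refine le_trans (Finset.sum_le_sum fun P hP => ?_) (Finset.sum_le_sum_of_subset_of_nonneg hsub ?_)
  · refine mul_le_mul_of_nonneg_left ?_ (Real.log_natCast_nonneg _)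
    rw [← Finset.sum_filter, Finset.sum_const, nsmul_eq_mul, mul_one]
    have : s.count P = (Finset.Icc 1 (s.count P)).card := by simp
    rw [this]
    norm_cast
    refine Finset.card_le_card fun k hk => ?_
    rw [Finset.mem_Icc] at hk
    have hdvd : P ^ k ∣ I := by
      refine (pow_dvd_pow P hk.2).trans ?_
      conv_rhs => rw [← hprod]
      exact Finset.dvd_prod_of_mem (fun P => P ^ s.count P) hP
    rw [Finset.mem_filter, Finset.mem_Icc]
    refine ⟨⟨hk.1, ?_⟩, ?_⟩
    · have h1 := hPN _ hdvd
      rw [map_pow] at h1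
      have h2 := two_le_of_mem_PF (hsub hP)
      have h3 : 2 ^ k ≤ Ideal.absNorm P ^ k := Nat.pow_le_pow_left h2 k
      have h4 : k < 2 ^ k := Nat.lt_two_pow_self
      omega
    · rw [← Ideal.span_singleton_le_iff_mem, ← Ideal.dvd_iff_le]; exact hdvd
  · intro P _ _
    exact mul_nonneg (Real.log_natCast_nonneg _) (Finset.sum_nonneg fun _ _ => by split_ifs <;> norm_num)


lemma S1_ge (n X : ℕ) : ∑ P ∈ PF K n, Real.log (Ideal.absNorm P) * (cnt0 b X P : ℝ) ≤
    ∑ α ∈ box b 0 X, Real.log (Ideal.absNorm (Ideal.span {α}) : ℕ) := by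
  have e : ∀ P : Ideal (𝓞 K), (cnt0 b X P : ℝ) = ∑ α ∈ box b 0 X, if (α ∈ P ∧ α ≠ 0) then (1:ℝ) else 0 := by
    intro P; unfold cnt0; rw [Finset.sum_boole]
  simp_rw [e, Finset.mul_sum]
  rw [Finset.sum_comm]
  refine Finset.sum_le_sum fun α _ => ?_
  by_cases h0 : α = 0
  · subst h0
    simp
  · have := sum_log_le ((PF K n).filter (fun P => α ∈ P)) (fun P hP => prime_of_mem_PF (Finset.mem_filter.1 hP).1)
      (Ideal.span {α}) (by rw [Ne, Ideal.span_singleton_eq_bot]; exact h0)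
      (fun P hP => by rw [Ideal.span_singleton_le_iff_mem]; exact (Finset.mem_filter.1 hP).2)
    refine le_trans (le_of_eq ?_) this
    rw [Finset.sum_filter]
    refine Finset.sum_congr rfl fun P _ => ?_
    simp [h0]

lemma S1_le (Y X : ℕ) (hY : ∀ α ∈ box b 0 X, Ideal.absNorm (Ideal.span {α}) ≤ Y) :
    ∑ α ∈ box b 0 X, Real.log (Ideal.absNorm (Ideal.span {α}) : ℕ) ≤
    ∑ P ∈ PF K Y, Real.log (Ideal.absNorm P) * ∑ k ∈ Finset.Icc 1 Y, (cnt0 b X (P ^ k) : ℝ) := by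
  have e : ∀ P : Ideal (𝓞 K), (cnt0 b X P : ℝ) = ∑ α ∈ box b 0 X, if (α ∈ P ∧ α ≠ 0) then (1:ℝ) else 0 := by
    intro P; unfold cnt0; rw [Finset.sum_boole]
  have e2 : ∀ P : Ideal (𝓞 K), Real.log (Ideal.absNorm P) * ∑ k ∈ Finset.Icc 1 Y, (cnt0 b X (P ^ k) : ℝ) =
      ∑ α ∈ box b 0 X, Real.log (Ideal.absNorm P) * ∑ k ∈ Finset.Icc 1 Y,
        if (α ∈ P ^ k ∧ α ≠ 0) then (1:ℝ) else 0 := by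
    intro P
    simp_rw [e]
    rw [Finset.sum_comm, Finset.mul_sum]
  rw [Finset.sum_congr rfl (fun P _ => e2 P), Finset.sum_comm]
  refine Finset.sum_le_sum fun α hα => ?_
  by_cases h0 : α = 0
  · subst h0
    simp
  · refine (log_norm_le h0 (hY α hα)).trans (le_of_eq ?_)
    simp [h0]

lemma S1_upper : ∃ C : ℝ, 0 ≤ C ∧ ∀ X : ℕ, 1 ≤ X →
    ∑ α ∈ box b 0 X, Real.log (Ideal.absNorm (Ideal.span {α}) : ℕ) ≤
      (X:ℝ)^d * Real.log ((X:ℝ)^d) + C * (X:ℝ)^d := by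
  obtain ⟨C1, hC1, hnorm⟩ := exists_norm_le b
  have hC1' : (1:ℝ) ≤ C1 := by exact_mod_cast hC1
  refine ⟨Real.log C1, Real.log_nonneg hC1', fun X hX => ?_⟩
  have hX' : (1:ℝ) ≤ X := by exact_mod_cast hX
  have hXd : (1:ℝ) ≤ (X:ℝ)^d := one_le_pow₀ hX'
  have : ∀ α ∈ box b 0 X, Real.log (Ideal.absNorm (Ideal.span {α}) : ℕ) ≤ Real.log C1 + Real.log ((X:ℝ)^d) := by
    intro α hα
    rw [← Real.log_mul (by positivity) (by positivity)]
    by_cases hz : Ideal.absNorm (Ideal.span {α}) = 0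
    · rw [hz]; simp only [Nat.cast_zero, Real.log_zero]
      exact Real.log_nonneg (by nlinarith)
    · refine Real.log_le_log (by exact_mod_cast Nat.pos_of_ne_zero hz) ?_
      exact_mod_cast hnorm X α hα
  refine (Finset.sum_le_card_nsmul _ _ _ this).trans (le_of_eq ?_)
  rw [card_box, nsmul_eq_mul]
  simp
  ring

lemma log_nn {n : ℕ} {P : Ideal (𝓞 K)} (h : P ∈ PF K n) : 0 ≤ Real.log (Ideal.absNorm P) :=
  Real.log_nonneg (by exact_mod_cast (by have := two_le_of_mem_PF h; omega : 1 ≤ Ideal.absNorm P))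

lemma rpow_pow_inv (X : ℕ) (hd : 0 < d) : ((X:ℝ)^d) ^ ((1:ℝ)/d) = X := by
  rw [one_div]; exact Real.pow_rpow_inv_natCast (by positivity) hd.ne'

lemma upper1 {K : Type*} [Field K] [NumberField K] {d : ℕ} (b : Module.Basis (Fin d) ℤ (𝓞 K)) : ∃ C : ℝ, 0 ≤ C ∧ ∀ X : ℕ, 1 ≤ X →
    ∑ P ∈ PF K (X ^ d), Real.log (Ideal.absNorm P) / (Ideal.absNorm P : ℕ) ≤ Real.log ((X:ℝ)^d) + C := by
  have hdp := d_pos b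
  obtain ⟨Cu, hCu, hu⟩ := S1_upper b
  obtain ⟨C, hC, happ⟩ := cnt_approx b 1 le_rfl
  set A : ℝ := Module.finrank ℤ (𝓞 K) * Real.log 4 with hA
  have hA0 : 0 ≤ A := by
    have := Real.log_nonneg (by norm_num : (1:ℝ) ≤ 4)
    positivity
  refine ⟨Cu + C * (A * d) + A, by positivity, fun X hX => ?_⟩
  have hX' : (1:ℝ) ≤ X := by exact_mod_cast hX
  have hXd : (0:ℝ) < (X:ℝ)^d := by positivity
  have hpw : (X:ℝ)^(d-1) * X = (X:ℝ)^d := by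
    rw [← pow_succ]; congr 1; omega
  have h1 := hu X hX
  have h2 := S1_ge b (X^d) X
  have h3 : ∑ P ∈ PF K (X ^ d), ((X:ℝ)^d * (Real.log (Ideal.absNorm P) / (Ideal.absNorm P : ℕ)) -
      C * (X:ℝ)^(d-1) * (Real.log (Ideal.absNorm P) * (((Ideal.absNorm P : ℕ):ℝ) ^ ((1:ℝ)/d) / (Ideal.absNorm P : ℕ)))
      - Real.log (Ideal.absNorm P)) ≤ ∑ P ∈ PF K (X^d), Real.log (Ideal.absNorm P) * (cnt0 b X P : ℝ) := by
    refine Finset.sum_le_sum fun P hP => ?_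
    have hm := mem_PF.1 hP
    have g1 := (abs_le.1 (happ X hX P hm.2.1 (by simpa using hm.2.2))).1
    have g2 : (cnt b X P : ℝ) ≤ cnt0 b X P + 1 := by exact_mod_cast cnt_le_cnt0 b X P
    have g3 : (X:ℝ)^d / (Ideal.absNorm P : ℕ) - C * (X:ℝ)^(d-1) * (((Ideal.absNorm P : ℕ):ℝ) ^ ((1:ℝ)/d) / Ideal.absNorm P) - 1 ≤ cnt0 b X P := by
      linarith
    refine le_trans (le_of_eq ?_) (mul_le_mul_of_nonneg_left g3 (log_nn hP))
    ring
  rw [Finset.sum_sub_distrib, Finset.sum_sub_distrib, ← Finset.mul_sum, ← Finset.mul_sum] at h3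
  have h4 := weighted_rpow (K := K) d hdp (X^d)
  have h5 := chebyshev_PF (K := K) (X^d)
  rw [Nat.cast_pow, rpow_pow_inv X hdp, ← hA] at h4
  rw [Nat.cast_pow, ← hA] at h5
  have h6 : C * (X:ℝ)^(d-1) * (∑ P ∈ PF K (X ^ d), (Real.log (Ideal.absNorm P) * (((Ideal.absNorm P : ℕ):ℝ) ^ ((1:ℝ)/d) / (Ideal.absNorm P : ℕ)))) ≤ C * (A * d) * (X:ℝ)^d := by
    refine (mul_le_mul_of_nonneg_left h4 (by positivity)).trans (le_of_eq ?_)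
    rw [← hpw]; ring
  refine le_of_mul_le_mul_left ?_ hXd
  linarith

lemma geom_tail (N : ℝ) (hN : 2 ≤ N) (Y : ℕ) : ∑ k ∈ Finset.Icc 2 Y, 1 / N ^ k ≤ 2 * (1 / N^2) := by
  have : ∀ n : ℕ, ∑ k ∈ Finset.Icc 2 (n+1), 1 / N ^ k ≤ 2 * (1 / N^2) - 1 / N^(n+1) * (1 / N) * 2 + 0 := by
    intro n
    induction n with
    | zero => simp; apply le_of_eq; field_simp
    | succ n ih =>
      rw [Finset.sum_Icc_succ_top (by omega)]
      have e : 1 / N^(n+1+1) = 1 / N^(n+1) * (1/N) := by rw [pow_succ _ (n+1)]; field_simp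
      have p : 0 ≤ 1 / N^(n+1) * (1/N) := by positivity
      have q : 1 / N ≤ 1/2 := by
        apply one_div_le_one_div_of_le <;> linarith
      rw [e]
      nlinarith
  rcases Y with _ | n
  · simp; positivity
  · have h := this n
    have p : 0 ≤ 1 / N^(n+1) * (1/N) := by positivity
    linarith

lemma lower1 {K : Type*} [Field K] [NumberField K] {d : ℕ} (b : Module.Basis (Fin d) ℤ (𝓞 K)) : ∃ C1 : ℕ, 1 ≤ C1 ∧ ∃ C : ℝ, 0 ≤ C ∧ ∀ X : ℕ, 1 ≤ X →
    Real.log ((X:ℝ)^d) - C ≤ ∑ P ∈ PF K (C1 * X ^ d), Real.log (Ideal.absNorm P) / (Ideal.absNorm P : ℕ) := by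
  have hdp := d_pos b
  obtain ⟨C1, hC1, hnorm⟩ := exists_norm_le b
  obtain ⟨Cl, hCl, hl⟩ := lower_log b
  obtain ⟨C, hC, happ⟩ := cnt_approx b C1 hC1
  obtain ⟨C2, hC2, hbd⟩ := cnt0_bound b
  have hC1' : (1:ℝ) ≤ C1 := by exact_mod_cast hC1
  set A : ℝ := Module.finrank ℤ (𝓞 K) * Real.log 4 with hA
  have hA0 : 0 ≤ A := by
    have := Real.log_nonneg (by norm_num : (1:ℝ) ≤ 4)
    positivity
  refine ⟨C1, hC1, Cl + C * (A * d * C1) + 2 * C2 * (A * 2), by positivity, fun X hX => ?_⟩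
  have hX' : (1:ℝ) ≤ X := by exact_mod_cast hX
  have hXd : (0:ℝ) < (X:ℝ)^d := by positivity
  have hpw : (X:ℝ)^(d-1) * X = (X:ℝ)^d := by
    rw [← pow_succ]; congr 1; omega
  have h1 := hl X hX
  set Y := C1 * X^d with hY
  have hY1 : 1 ≤ Y := Nat.mul_pos hC1 (pow_pos hX d)
  have h2 := S1_le b Y X (hnorm X)
  have h3 : ∑ P ∈ PF K Y, Real.log (Ideal.absNorm P) * ∑ k ∈ Finset.Icc 1 Y, (cnt0 b X (P ^ k) : ℝ) ≤
    ∑ P ∈ PF K Y, ((X:ℝ)^d * (Real.log (Ideal.absNorm P) / (Ideal.absNorm P : ℕ)) +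
      C * (X:ℝ)^(d-1) * (Real.log (Ideal.absNorm P) * (((Ideal.absNorm P : ℕ):ℝ) ^ ((1:ℝ)/d) / (Ideal.absNorm P : ℕ)))
      + (2 * C2 * (X:ℝ)^d) * (Real.log (Ideal.absNorm P) * (1 / ((Ideal.absNorm P : ℕ):ℝ)^2))) := by
    refine Finset.sum_le_sum fun P hP => ?_
    have hm := mem_PF.1 hP
    have hN : (2:ℝ) ≤ (Ideal.absNorm P : ℕ) := by exact_mod_cast two_le_of_mem_PF hP
    have g1 := (abs_le.1 (happ X hX P hm.2.1 hm.2.2)).2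
    have g2 : (cnt0 b X P : ℝ) ≤ cnt b X P := by exact_mod_cast cnt0_le_cnt b X P
    have g3 : ∑ k ∈ Finset.Icc 2 Y, (cnt0 b X (P ^ k) : ℝ) ≤ C2 * (X:ℝ)^d * (2 * (1 / ((Ideal.absNorm P : ℕ):ℝ)^2)) := by
      refine le_trans ?_ (mul_le_mul_of_nonneg_left (geom_tail _ hN Y) (by positivity))
      rw [Finset.mul_sum]
      refine Finset.sum_le_sum fun k _ => ?_
      have := hbd X hX (P^k) (pow_ne_zero k hm.2.1)
      rw [map_pow, Nat.cast_pow] at this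
      rw [mul_one_div]; exact this
    have g4 : ∑ k ∈ Finset.Icc 1 Y, (cnt0 b X (P ^ k) : ℝ) = cnt0 b X P + ∑ k ∈ Finset.Icc 2 Y, (cnt0 b X (P ^ k) : ℝ) := by
      rw [← Finset.add_sum_Ioc_eq_sum_Icc hY1, pow_one]; rfl
    have g5 : ∑ k ∈ Finset.Icc 1 Y, (cnt0 b X (P ^ k) : ℝ) ≤ (X:ℝ)^d / (Ideal.absNorm P : ℕ) + C * (X:ℝ)^(d-1) * (((Ideal.absNorm P : ℕ):ℝ) ^ ((1:ℝ)/d) / Ideal.absNorm P) + C2 * (X:ℝ)^d * (2 * (1 / ((Ideal.absNorm P : ℕ):ℝ)^2)) := by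
      rw [g4]; linarith
    refine le_trans (mul_le_mul_of_nonneg_left g5 (log_nn hP)) (le_of_eq ?_)
    ring
  rw [Finset.sum_add_distrib, Finset.sum_add_distrib, ← Finset.mul_sum, ← Finset.mul_sum, ← Finset.mul_sum] at h3
  have h4 := weighted_rpow (K := K) d hdp Y
  have h5 := weighted_sq (K := K) Y
  have hYr : (Y:ℝ) ^ ((1:ℝ)/d) ≤ C1 * X := by
    rw [hY, Nat.cast_mul, Nat.cast_pow, Real.mul_rpow (by positivity) (by positivity), rpow_pow_inv X hdp]
    refine mul_le_mul_of_nonneg_right ?_ (by positivity)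
    conv_rhs => rw [← Real.rpow_one (C1:ℝ)]
    refine Real.rpow_le_rpow_of_exponent_le hC1' ?_
    rw [div_le_one (by exact_mod_cast hdp)]; exact_mod_cast hdp
  rw [← hA] at h4 h5
  have h6 : C * (X:ℝ)^(d-1) * (∑ P ∈ PF K Y, (Real.log (Ideal.absNorm P) * (((Ideal.absNorm P : ℕ):ℝ) ^ ((1:ℝ)/d) / (Ideal.absNorm P : ℕ)))) ≤ C * (A * d * C1) * (X:ℝ)^d := by
    refine (mul_le_mul_of_nonneg_left (h4.trans (mul_le_mul_of_nonneg_left (mul_le_mul_of_nonneg_left hYr (by positivity)) hA0)) (by positivity)).trans (le_of_eq ?_)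
    rw [← hpw]; ring
  have h7 := mul_le_mul_of_nonneg_left h5 (by positivity : 0 ≤ 2 * C2 * (X:ℝ)^d)
  refine le_of_mul_le_mul_left ?_ hXd
  linarith

lemma exists_root (hd : 0 < d) (t : ℝ) (ht : 1 ≤ t) : ∃ X : ℕ, 1 ≤ X ∧ (X:ℝ)^d ≤ t ∧ t ≤ ((2 * X : ℕ):ℝ)^d := by
  have h0 : 0 ≤ t := by linarith
  set s := t ^ ((d:ℝ)⁻¹) with hs
  have hsd : s ^ d = t := Real.rpow_inv_natCast_pow h0 hd.ne'
  have hs1 : 1 ≤ s := Real.one_le_rpow ht (by positivity)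
  have hX1 : 1 ≤ ⌊s⌋₊ := Nat.le_floor (by simpa using hs1)
  have hX1' : (1:ℝ) ≤ ⌊s⌋₊ := by exact_mod_cast hX1
  refine ⟨⌊s⌋₊, hX1, ?_, ?_⟩
  · rw [← hsd]; exact pow_le_pow_left₀ (by positivity) (Nat.floor_le (by linarith)) d
  · rw [← hsd]
    refine pow_le_pow_left₀ (by linarith) ?_ d
    push_cast
    have := Nat.lt_floor_add_one s
    linarith

lemma MM_mono {m n : ℕ} (h : m ≤ n) : ∑ P ∈ PF K m, Real.log (Ideal.absNorm P) / (Ideal.absNorm P : ℕ) ≤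
    ∑ P ∈ PF K n, Real.log (Ideal.absNorm P) / (Ideal.absNorm P : ℕ) := by
  refine Finset.sum_le_sum_of_subset_of_nonneg ?_ ?_
  · intro P hP
    rw [mem_PF] at hP ⊢
    exact ⟨hP.1, hP.2.1, hP.2.2.trans h⟩
  · intro P hP _
    exact div_nonneg (log_nn hP) (by positivity)

lemma first_mertens (K : Type*) [Field K] [NumberField K] : ∃ C : ℝ, ∀ n : ℕ, 1 ≤ n →
    |∑ m ∈ Finset.Icc 1 n, rr K m * Real.log m / m - Real.log n| ≤ C := by
  let b := Module.finBasis ℤ (𝓞 K)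
  have hd := d_pos b
  obtain ⟨Cu, hCu, hu⟩ := upper1 b
  obtain ⟨C1, hC1, Cl, hCl, hl⟩ := lower1 b
  set d := Module.finrank ℤ (𝓞 K) with hdd
  have hC1' : (1:ℝ) ≤ C1 := by exact_mod_cast hC1
  have hlC : 0 ≤ Real.log C1 := Real.log_nonneg hC1'
  have hl2 : 0 ≤ Real.log ((2:ℝ)^d) := Real.log_nonneg (one_le_pow₀ (by norm_num))
  refine ⟨Cu + Cl + Real.log C1 + Real.log ((2:ℝ)^d), fun n hn => ?_⟩
  have hn' : (1:ℝ) ≤ n := by exact_mod_cast hn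
  have e : ∑ m ∈ Finset.Icc 1 n, rr K m * Real.log m / m =
      ∑ P ∈ PF K n, Real.log (Ideal.absNorm P) / (Ideal.absNorm P : ℕ) := by
    rw [sum_PF n (fun m => Real.log m / m)]
    simp only [mul_div_assoc]
  rw [e, abs_le]
  constructor
  · rcases lt_or_ge n C1 with h | h
    · have p : 0 ≤ ∑ P ∈ PF K n, Real.log (Ideal.absNorm P) / (Ideal.absNorm P : ℕ) :=
        Finset.sum_nonneg fun P hP => div_nonneg (log_nn hP) (by positivity)
      have q : Real.log n ≤ Real.log C1 := Real.log_le_log (by linarith) (by exact_mod_cast h.le)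
      linarith
    · have h' : (C1:ℝ) ≤ n := by exact_mod_cast h
      obtain ⟨X, hX, hX1, hX2⟩ := exists_root hd ((n:ℝ) / C1) (by rw [le_div_iff₀ (by linarith)]; linarith)
      have hX' : (1:ℝ) ≤ X := by exact_mod_cast hX
      have p := hl X hX
      have q : C1 * X^d ≤ n := by
        rw [le_div_iff₀ (by linarith)] at hX1
        have : (C1:ℝ) * (X:ℝ)^d ≤ n := by linarith
        exact_mod_cast this
      have r := MM_mono (K := K) q
      have s : Real.log ((n:ℝ) / C1) ≤ Real.log (((2 * X : ℕ):ℝ)^d) := Real.log_le_log (by positivity) hX2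
      rw [Nat.cast_mul, mul_pow, Real.log_mul (by positivity) (by positivity),
        Real.log_div (by positivity) (by positivity)] at s
      simp only [Nat.cast_ofNat] at s
      linarith
  · obtain ⟨X, hX, hX1, hX2⟩ := exists_root hd (n:ℝ) hn'
    have hX' : (1:ℝ) ≤ X := by exact_mod_cast hX
    have p := hu (2 * X) (by omega)
    have q : n ≤ (2 * X)^d := by exact_mod_cast hX2
    have r := MM_mono (K := K) q
    have s : Real.log ((X:ℝ)^d) ≤ Real.log n := Real.log_le_log (by positivity) hX1
    rw [Nat.cast_mul, mul_pow (_ : ℝ), Real.log_mul (by positivity) (by positivity)] at p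
    simp only [Nat.cast_ofNat] at p
    linarith

lemma final (K : Type*) [Field K] [NumberField K] : ∃ C : ℝ,
      (fun x : ℝ =>
          (∑ᶠ P ∈ {P : Ideal (𝓞 K) |
              P.IsPrime ∧ P ≠ ⊥ ∧ (Ideal.absNorm P : ℝ) ≤ x},
            (1 : ℝ) / (Ideal.absNorm P : ℝ)) -
          Real.log (Real.log x) - C)
        =O[atTop] fun x => 1 / Real.log x := by
  obtain ⟨C, hC⟩ := first_mertens K
  obtain ⟨L, C', h⟩ := mertens_abstract (rr K) C hC
  refine ⟨L, IsBigO.of_bound (2 * (|C'| + 1)) ?_⟩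
  rw [eventually_atTop]
  refine ⟨4, fun x hx => ?_⟩
  set n := ⌊x⌋₊ with hn
  have hx0 : 0 ≤ x := by linarith
  have hn4 : 4 ≤ n := Nat.le_floor (by exact_mod_cast hx)
  have hn4' : (4:ℝ) ≤ n := by exact_mod_cast hn4
  have hnx : (n:ℝ) ≤ x := Nat.floor_le hx0
  have hxn : x < n + 1 := Nat.lt_floor_add_one x
  have es : {P : Ideal (𝓞 K) | P.IsPrime ∧ P ≠ ⊥ ∧ (Ideal.absNorm P : ℝ) ≤ x} = ↑(PF K n) := by
    ext P
    simp only [Set.mem_ofPred_eq, Finset.mem_coe, mem_PF, hn, Nat.le_floor_iff hx0]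
  rw [es, finsum_mem_coe_finset, sum_PF n (fun m => (1:ℝ) / m)]
  simp only [mul_one_div]
  have h1 := h n (by omega)
  have hln : 1 ≤ Real.log n := by
    rw [Real.le_log_iff_exp_le (by linarith)]
    have := Real.exp_one_lt_d9
    linarith
  have hlx : Real.log n ≤ Real.log x := Real.log_le_log (by linarith) hnx
  have hlx2 : Real.log x ≤ 2 * Real.log n := by
    have : Real.log x ≤ Real.log ((n:ℝ)^2) := Real.log_le_log (by linarith) (by nlinarith)
    rwa [Real.log_pow, Nat.cast_ofNat] at this
  have hd1 : Real.log x - Real.log n ≤ 1 := by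
    rw [← Real.log_div (by linarith) (by linarith)]
    refine (Real.log_le_sub_one_of_pos (by positivity)).trans ?_
    have : x / n ≤ 2 := by rw [div_le_iff₀ (by linarith)]; linarith
    linarith
  have hll : Real.log (Real.log x) - Real.log (Real.log n) ≤ 1 / Real.log n := by
    rw [← Real.log_div (by linarith) (by linarith)]
    refine (Real.log_le_sub_one_of_pos (by apply div_pos <;> linarith)).trans ?_
    rw [div_sub_one (by linarith)]
    gcongr
  have hll0 : Real.log (Real.log n) ≤ Real.log (Real.log x) := Real.log_le_log (by linarith) hlx
  have hb : 1 / Real.log n ≤ 2 * (1 / Real.log x) := by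
    rw [mul_one_div, div_le_div_iff₀ (by linarith) (by linarith)]; linarith
  rw [Real.norm_eq_abs, Real.norm_eq_abs, abs_of_nonneg (by apply one_div_nonneg.2; linarith : 0 ≤ 1 / Real.log x)]
  have h2 : C' / Real.log n ≤ |C'| * (1 / Real.log n) := by
    rw [mul_one_div]; gcongr; exact le_abs_self _
  have h3 : (|C'| + 1) * (1 / Real.log n) ≤ (|C'| + 1) * (2 * (1 / Real.log x)) := by gcongr
  have h4 := abs_le.1 h1
  rw [abs_le]
  constructor <;> nlinarith

end
end MertensNF


/-- Mertens' theorem for number fields: there is a constant `C` such that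
`∑_{N(𝔭) ≤ x} 1/N(𝔭) = log log x + C + O(1/log x)`. -/
theorem mertens_number_field (K : Type*) [Field K] [NumberField K] :
    ∃ C : ℝ,
      (fun x : ℝ =>
          (∑ᶠ P ∈ {P : Ideal (NumberField.RingOfIntegers K) |
              P.IsPrime ∧ P ≠ ⊥ ∧ (Ideal.absNorm P : ℝ) ≤ x},
            (1 : ℝ) / (Ideal.absNorm P : ℝ)) -
          Real.log (Real.log x) - C)
        =O[atTop] fun x => 1 / Real.log x := by
  exact MertensNF.final K
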